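/- Let G be a graph with a circuit C and ω : E(G) → Z⁺ with ω(C) ≤ 35. If there is a Z₂×Z₂-flow f of G such that E(G) − E(C) ⊆ supp(f), then there is a Z₂×Z₂-flow g of G such that E(G) − E(C) ⊆ supp(g) and ω(E_{g=(0,0)}(C)) < ω(C)/4. -/

import Mathlib

open Finset

/-- The number of endpoints of the (possibly looped) edge `s` equal to `v`
(a loop at `v` counts twice). -/
def edgeCount {V : Type} [DecidableEq V] (s : Sym2 V) (v : V) : ℕ :=
  Sym2.lift ⟨fun a b => (if a = v then 1 else 0) + (if b = v then 1 else 0),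
    fun a b => by dsimp; omega⟩ s

/-- A `ℤ₂ × ℤ₂`-flow of a multigraph with edge-ends map `ends`:
the values on edges incident with a vertex (loops counted twice) sum to `(0,0)`. -/
def IsFlow {V E : Type} [DecidableEq V] [Fintype E] (ends : E → Sym2 V)
    (f : E → ZMod 2 × ZMod 2) : Prop :=
  ∀ v : V, ∑ e : E, edgeCount (ends e) v • f e = 0

/-- An even subgraph (cycle): every vertex has even degree. -/
def IsEvenSub {V E : Type} [DecidableEq V] (ends : E → Sym2 V) (S : Finset E) : Prop :=
  ∀ v : V, Even (∑ e ∈ S, edgeCount (ends e) v)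

/-- A circuit: a nonempty connected 2-regular subgraph, given by its edge set. -/
def IsCircuit {V E : Type} [DecidableEq V] (ends : E → Sym2 V) (CE : Finset E) : Prop :=
  CE.Nonempty ∧
  (∀ v : V, (∑ e ∈ CE, edgeCount (ends e) v = 0) ∨ (∑ e ∈ CE, edgeCount (ends e) v = 2)) ∧
  ∀ e₁ ∈ CE, ∀ e₂ ∈ CE,
    Relation.ReflTransGen (fun a b => ∃ v : V, v ∈ ends a ∧ v ∈ ends b ∧ a ∈ CE ∧ b ∈ CE) e₁ e₂

/-!
Suppose that every flow that is nonzero off `C` vanishes on at least a quarter of the weight of `C`.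
Adding the four constants along `C` to such a flow `g` shows that `g` takes each of its four values
on exactly a quarter of the weight.

Go around `C` and look at the vertices where the first coordinate of `g` jumps. The edges off `C`
where the first coordinate is nonzero link these vertices in pairs, and this gives a chord diagram:
a path off `C` between the ends of a chord closes up along one side of the chord to a cycle along
which the second coordinate of `g` may be flipped. All the flows obtained in this way are equally
distributed on `C`, and Fourier inversion over the flips shows that both values of the second
coordinate occur in each cell of the diagram (a class of edges of `C` not separated by any chord).

Call a chord mixed if the second coordinate jumps at exactly one of its ends. An induction on the
arcs between two edges of a cell, in which the two colours of each cell cut off by a chord outweigh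
the ends of this chord, shows that the number of ends of mixed chords is less than twice the number
of jumps `(0, 1)`. Now flip along the chords with both jumps equal to `(1, 0)`. A jump is then
`(1, 0)` only at one end of each mixed chord, so exchanging the two coordinates gives a flow with
fewer jumps `(0, 1)`: infinite descent.
-/

section Pairing

variable {α : Type*}

lemma even_card_filter_sdiff_pair [DecidableEq α] {r : α → α → Prop} [DecidableRel r]
    (hr : Equivalence r) {s : Finset α} {a b c : α} (ha : a ∈ s) (hb : b ∈ s) (hne : a ≠ b)
    (hab : r a b) (heven : Even #{x ∈ s | r c x}) : Even #{x ∈ s \ {a, b} | r c x} := by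
  have hpair : Even #{x ∈ ({a, b} : Finset α) | r c x} := by
    by_cases hca : r c a
    · have hcb : r c b := hr.trans hca hab
      simp [filter_insert, filter_singleton, hca, hcb, hne]
    · have hcb : ¬ r c b := fun h => hca (hr.trans h (hr.symm hab))
      simp [filter_insert, filter_singleton, hca, hcb]
  have hadd : #{x ∈ s \ {a, b} | r c x} + #{x ∈ ({a, b} : Finset α) | r c x} =
      #{x ∈ s | r c x} := by
    rw [← card_union_of_disjoint (disjoint_filter_filter sdiff_disjoint), ← filter_union,
      sdiff_union_of_subset (by simp [insert_subset_iff, ha, hb])]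
  rw [← hadd] at heven
  exact (Nat.even_add.1 heven).2 hpair

lemma involutive_comp_swap [DecidableEq α] {σ : α → α} {a b : α} (hσ : Function.Involutive σ)
    (ha : σ a = a) (hb : σ b = b) : Function.Involutive (σ ∘ Equiv.swap a b) := by
  have hfix : ∀ x, ∀ c, σ c = c → x ≠ c → σ x ≠ c := fun x c hc hx h => hx (by rw [← hσ x, h, hc])
  have hcomm : ∀ x, Equiv.swap a b (σ x) = σ (Equiv.swap a b x) := by
    intro x
    by_cases hxa : x = a
    · simp [hxa, ha, hb]
    by_cases hxb : x = b
    · simp [hxb, ha, hb]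
    rw [Equiv.swap_apply_of_ne_of_ne (hfix x a ha hxa) (hfix x b hb hxb),
      Equiv.swap_apply_of_ne_of_ne hxa hxb]
  intro x
  simp [hcomm, hσ x]

lemma exists_involutive_of_even_classes {r : α → α → Prop} [DecidableRel r] (hr : Equivalence r)
    (s : Finset α) (heven : ∀ a ∈ s, Even #{b ∈ s | r a b}) :
    ∃ σ : α → α, Function.Involutive σ ∧ (∀ a, σ a ≠ a ↔ a ∈ s) ∧ ∀ a, r a (σ a) := by
  classical
  induction s using Finset.strongInduction with
  | H s ih =>
  rcases s.eq_empty_or_nonempty with rfl | ⟨a, ha⟩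
  · exact ⟨id, fun _ => rfl, by simp, hr.refl⟩
  have hone : 1 < #{b ∈ s | r a b} := by
    have hpos : 0 < #{b ∈ s | r a b} := card_pos.2 ⟨a, by simp [ha, hr.refl a]⟩
    obtain ⟨k, hk⟩ := heven a ha
    omega
  obtain ⟨b, hb, hba⟩ := exists_mem_ne hone a
  obtain ⟨hbs, hab⟩ := mem_filter.1 hb
  have hsub : {a, b} ⊆ s := by simp [insert_subset_iff, ha, hbs]
  obtain ⟨σ, hσ, hmoved, hrel⟩ := ih _ (sdiff_ssubset hsub ⟨a, by simp⟩) fun c hc =>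
    even_card_filter_sdiff_pair hr ha hbs hba.symm hab (heven c (mem_sdiff.1 hc).1)
  have hσa : σ a = a := by simpa using (hmoved a).not
  have hσb : σ b = b := by simpa using (hmoved b).not
  refine ⟨_, involutive_comp_swap hσ hσa hσb, fun x => ?_, fun x => ?_⟩
  all_goals
    rcases eq_or_ne x a with rfl | hxa
    · simp_all
    rcases eq_or_ne x b with rfl | hxb
    · simp_all [hr.symm hab, hba.symm]
    simp_all [Equiv.swap_apply_of_ne_of_ne]

end Pairing

section Chords

/-- The jump of a sequence at a position `v ≥ 1`; in characteristic two a sum is a difference. -/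
def jump {M : Type*} [Add M] (z : ℕ → M) (v : ℕ) : M := z (v - 1) + z v

/-- An involution `σ` of `ℕ` is seen as a chord diagram with a chord between `u` and `σ u` for each
moved point `u`. Two gaps `p`, `q` (the gap `p` lies between the points `p` and `p + 1`) are in the
same cell if no chord separates them. The interval `Ico u (σ u)` is one side of the chord if
`u < σ u`, and empty otherwise. -/
def SameCell (σ : ℕ → ℕ) (p q : ℕ) : Prop :=
  ∀ u, p ∈ Ico u (σ u) ↔ q ∈ Ico u (σ u)

/-- The weight of a point in a chord diagram with gaps coloured by `z`: a colour change off the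
chords counts `-2`, and each end of a chord with a colour change at exactly one end counts `1`. -/
def chordWeight (σ : ℕ → ℕ) (z : ℕ → ZMod 2) (v : ℕ) : ℤ :=
  if σ v = v then (if jump z v = 0 then 0 else -2)
  else if jump z v = jump z (σ v) then 0 else 1

/-- Each of the cells containing one of the gaps `0, …, n` has gaps of both colours there. -/
def IsBichromatic (σ : ℕ → ℕ) (z : ℕ → ZMod 2) (n : ℕ) : Prop :=
  ∀ p ≤ n, ∃ q ≤ n, SameCell σ p q ∧ z q ≠ z p

/-- The upper bound for the weight between two gaps `i ≤ j` of a cell in a bichromatic diagram. -/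
def WeightBound (σ : ℕ → ℕ) (z : ℕ → ZMod 2) (i j : ℕ) : Prop :=
  ∑ v ∈ Ioc i j, chordWeight σ z v ≤ if z i = z j then 0 else -2

/-- `i < j` are consecutive gaps of a cell. -/
structure IsConsecutive (σ : ℕ → ℕ) (i j : ℕ) : Prop where
  lt : i < j
  sameCell : SameCell σ i j
  not_sameCell : ∀ s, i < s → s < j → ¬ SameCell σ i s

/-- The situation in the induction step for `WeightBound`: an arc between consecutive gaps of a cell
in a bichromatic diagram, with the bound known for all shorter arcs. -/
structure IsInductionArc (σ : ℕ → ℕ) (z : ℕ → ZMod 2) (n i j : ℕ) : Prop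
    extends IsConsecutive σ i j where
  isBichromatic : IsBichromatic σ z n
  le : j ≤ n
  weightBound_of_lt : ∀ a b, a ≤ b → b ≤ n → b - a < j - i → SameCell σ a b → WeightBound σ z a b

/-- No cell has both a gap before `p` and a gap in `[p, j)`. -/
def IsFresh (σ : ℕ → ℕ) (j p : ℕ) : Prop :=
  ∀ q s, q < p → p ≤ s → s < j → ¬ SameCell σ q s

variable {σ : ℕ → ℕ} {z : ℕ → ZMod 2} {i j k n p p' q v : ℕ}

namespace SameCell

lemma refl (p : ℕ) : SameCell σ p p := fun _ => Iff.rfl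

lemma symm (h : SameCell σ p q) : SameCell σ q p := fun u => (h u).symm

lemma trans (h : SameCell σ p q) (h' : SameCell σ q k) : SameCell σ p k :=
  fun u => (h u).trans (h' u)

lemma of_crossing {a b c d : ℕ} (hab : a ≤ b) (hbc : b ≤ c) (hcd : c ≤ d)
    (hac : SameCell σ a c) (hbd : SameCell σ b d) : SameCell σ b c := by
  intro u
  have := hac u
  have := hbd u
  simp only [mem_Ico] at *
  omega

lemma of_apply_eq (hσ : Function.Involutive σ) (h : σ (i + 1) = i + 1) :
    SameCell σ i (i + 1) := by
  intro u
  have hu : u ≠ i + 1 ∨ σ u = i + 1 := by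
    by_cases hu : u = i + 1
    · exact .inr (hu ▸ h)
    · exact .inl hu
  have hu' : σ u = i + 1 → u = i + 1 := fun h' => by rw [← hσ u, h', h]
  simp only [mem_Ico]
  omega

lemma apply_mem_Ioc (hσ : Function.Involutive σ) (h : SameCell σ i j) (hv : v ∈ Ioc i j) :
    σ v ∈ Ioc i j := by
  have := h v
  have := h (σ v)
  simp only [hσ v, mem_Ico, mem_Ioc] at *
  omega

end SameCell

lemma chordWeight_le_one (v : ℕ) : chordWeight σ z v ≤ 1 := by
  unfold chordWeight
  split_ifs <;> norm_num

lemma chordWeight_apply (hσ : Function.Involutive σ) (v : ℕ) :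
    chordWeight σ z (σ v) = chordWeight σ z v := by
  by_cases hv : σ v = v
  · rw [hv]
  · simp [chordWeight, hσ v, hv, Ne.symm hv, eq_comm]

lemma even_sum_chordWeight (hσ : Function.Involutive σ) (h : SameCell σ i j) :
    Even (∑ v ∈ Ioc i j, chordWeight σ z v) := by
  rw [← ZMod.intCast_eq_zero_iff_even, Int.cast_sum]
  refine sum_involution (fun v _ => σ v) (fun v _ => ?_) (fun v _ hv hfix => hv ?_)
    (fun v hv => h.apply_mem_Ioc hσ hv) (fun v _ => hσ v)
  · rw [chordWeight_apply hσ, CharTwo.add_self_eq_zero]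
  · rw [chordWeight, if_pos hfix, ZMod.intCast_eq_zero_iff_even]
    split_ifs <;> decide

lemma sum_chordWeight_add (hik : i ≤ k) (hkj : k ≤ j) :
    ∑ v ∈ Ioc i k, chordWeight σ z v + ∑ v ∈ Ioc k j, chordWeight σ z v =
      ∑ v ∈ Ioc i j, chordWeight σ z v :=
  sum_Ioc_consecutive _ hik hkj

lemma WeightBound.trans (hik : i ≤ k) (hkj : k ≤ j) (h : WeightBound σ z i k)
    (h' : WeightBound σ z k j) : WeightBound σ z i j := by
  have hcolour : ∀ a b c : ZMod 2, (if a = b then 0 else -2) + (if b = c then 0 else -2) ≤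
      (if a = c then 0 else -2 : ℤ) := by decide
  rw [WeightBound, ← sum_chordWeight_add hik hkj]
  exact (add_le_add h h').trans (hcolour _ _ _)

lemma WeightBound.sum_le_of_ne (hik : i ≤ k) (hkj : k ≤ j) (hne : z k ≠ z i)
    (h : WeightBound σ z i k) (h' : WeightBound σ z k j) :
    ∑ v ∈ Ioc i j, chordWeight σ z v ≤ if z i = z j then -4 else -2 := by
  have hcolour : ∀ a b c : ZMod 2, b ≠ a → (if a = b then 0 else -2) +
      (if b = c then 0 else -2) ≤ (if a = c then -4 else -2 : ℤ) := by decide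
  rw [← sum_chordWeight_add hik hkj]
  exact (add_le_add h h').trans (hcolour _ _ _ hne)

lemma exists_last_sameCell (hpj : p < j) :
    ∃ p', p ≤ p' ∧ p' < j ∧ SameCell σ p p' ∧ ∀ s, p' < s → s < j → ¬ SameCell σ p s := by
  classical
  refine ⟨Nat.findGreatest (SameCell σ p) (j - 1), ?_, ?_, ?_, fun s hs hsj => ?_⟩
  · exact Nat.le_findGreatest (by omega) (.refl p)
  · have := Nat.findGreatest_le (P := SameCell σ p) (j - 1)
    omega
  · exact Nat.findGreatest_spec (m := p) (by omega) (.refl p)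
  · exact Nat.findGreatest_is_greatest hs (by omega)

lemma IsConsecutive.isFresh_succ (h : IsConsecutive σ i j) : IsFresh σ j (i + 1) :=
  fun _ s hq hs hsj hqs =>
    h.not_sameCell s (by omega) hsj (.of_crossing (by omega) (by omega) hsj.le hqs h.sameCell)

lemma IsFresh.succ_last (hp : IsFresh σ j p) (hpp' : p ≤ p') (hsame : SameCell σ p p')
    (hlast : ∀ s, p' < s → s < j → ¬ SameCell σ p s) : IsFresh σ j (p' + 1) := by
  intro q s hq hs hsj hqs
  rcases lt_or_ge q p with hqp | hpq
  · exact hp q s hqp (by omega) hsj hqs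
  · have hqp' : SameCell σ q p' := .of_crossing hpq (by omega) (by omega) hsame hqs
    exact hlast s (by omega) hsj (hsame.trans (hqp'.symm.trans hqs))

namespace IsInductionArc

lemma sum_cell_le (h : IsInductionArc σ z n i j) (hp : IsFresh σ j p) (hip : i < p)
    (hpp' : p ≤ p') (hp'j : p' < j) (hsame : SameCell σ p p')
    (hlast : ∀ s, p' < s → s < j → ¬ SameCell σ p s) :
    ∑ v ∈ Ioc p p', chordWeight σ z v ≤ if z p = z p' then -4 else -2 := by
  have hjn := h.le
  obtain ⟨q, hqn, hpq, hne⟩ := h.isBichromatic p (by omega)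
  have hle : p ≤ q := by
    by_contra! hlt
    exact hp q p hlt le_rfl (by omega) hpq.symm
  have hqj : q < j := by
    by_contra! hjq
    have hpj : SameCell σ p j := .of_crossing hip.le (by omega) hjq h.sameCell hpq
    exact h.not_sameCell p hip (by omega) (h.sameCell.trans hpj.symm)
  have hqp' : q ≤ p' := by
    by_contra! hlt
    exact hlast q hlt hqj hpq
  exact WeightBound.sum_le_of_ne hle hqp' hne (h.weightBound_of_lt p q hle hqn (by omega) hpq)
    (h.weightBound_of_lt q p' hqp' (by omega) (by omega) (hpq.symm.trans hsame))

lemma sum_succ_last_le (h : IsInductionArc σ z n i j) (hp : IsFresh σ j p) (hip : i < p)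
    (hpp' : p ≤ p') (hp'j : p' < j) (hsame : SameCell σ p p')
    (hlast : ∀ s, p' < s → s < j → ¬ SameCell σ p s) :
    ∑ v ∈ Ioc p (p' + 1), chordWeight σ z v ≤ -1 := by
  have hcell := h.sum_cell_le hp hip hpp' hp'j hsame hlast
  have hone := chordWeight_le_one (σ := σ) (z := z) (p' + 1)
  rw [sum_Ioc_succ_top hpp']
  split_ifs at hcell <;> omega

lemma sum_le_neg_one (h : IsInductionArc σ z n i j) (hp : IsFresh σ j p) (hip : i < p)
    (hpj : p < j) : ∑ v ∈ Ioc p j, chordWeight σ z v ≤ -1 := by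
  induction hm : j - p using Nat.strong_induction_on generalizing p with
  | _ m ihm =>
  obtain ⟨p', hpp', hp'j, hsame, hlast⟩ := exists_last_sameCell (σ := σ) hpj
  have hstep := h.sum_succ_last_le hp hip hpp' hp'j hsame hlast
  rcases Nat.eq_or_lt_of_le (Nat.succ_le_of_lt hp'j) with rfl | hlt
  · exact hstep
  · have hrest := ihm (j - (p' + 1)) (by omega) (hp.succ_last hpp' hsame hlast) (by omega) hlt rfl
    rw [← sum_chordWeight_add (by omega : p ≤ p' + 1) hlt.le]
    omega

lemma sum_le_neg_two (h : IsInductionArc σ z n i j) (hp : IsFresh σ j p) (hip : i < p)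
    (hpj : p < j) (hne : ¬ SameCell σ p (j - 1)) : ∑ v ∈ Ioc p j, chordWeight σ z v ≤ -2 := by
  obtain ⟨p', hpp', hp'j, hsame, hlast⟩ := exists_last_sameCell (σ := σ) hpj
  have hp'_ne : p' ≠ j - 1 := fun hp' => hne (hp' ▸ hsame)
  have hstep := h.sum_succ_last_le hp hip hpp' hp'j hsame hlast
  have hrest := h.sum_le_neg_one (hp.succ_last hpp' hsame hlast) (by omega) (by omega)
  rw [← sum_chordWeight_add (by omega : p ≤ p' + 1) (by omega : p' + 1 ≤ j)]
  omega

-- The chord at `i + 1` crosses no other one, so it ends at `j` and encloses one outermost cell.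
lemma weightBound_of_sameCell (h : IsInductionArc σ z n i j) (hσ : Function.Involutive σ)
    (hlt : i + 1 < j) (hmoved : σ (i + 1) ≠ i + 1) (hin : SameCell σ (i + 1) (j - 1)) :
    WeightBound σ z i j := by
  obtain ⟨k, rfl⟩ : ∃ k, j = k + 1 := ⟨j - 1, by omega⟩
  have hend : σ (i + 1) = k + 1 := by
    have hmem := h.sameCell.apply_mem_Ioc hσ (v := i + 1) (by simp; omega)
    have hnot : σ (i + 1) ∉ Ioc (i + 1) k := fun hmem => by
      simpa [hσ (i + 1)] using hin.apply_mem_Ioc hσ hmem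
    simp only [mem_Ioc] at hmem hnot
    omega
  have hcell := h.sum_cell_le h.isFresh_succ (by omega) (by omega)
    (Nat.lt_succ_self k) hin (by omega)
  have hfirst : chordWeight σ z (i + 1) =
      if z i + z (i + 1) = z k + z (k + 1) then 0 else 1 := by
    rw [chordWeight, if_neg hmoved, hend]
    rfl
  have hlast : chordWeight σ z (k + 1) = chordWeight σ z (i + 1) := by
    rw [← hend, chordWeight_apply hσ]
  have hcolour : ∀ a b c d : ZMod 2, (if a + b = c + d then 0 else 1) +
      (if b = c then -4 else -2) + (if a + b = c + d then 0 else 1) ≤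
      (if a = d then 0 else -2 : ℤ) := by decide
  have hsplit : ∑ v ∈ Ioc i (k + 1), chordWeight σ z v = chordWeight σ z (i + 1) +
      ∑ v ∈ Ioc (i + 1) k, chordWeight σ z v + chordWeight σ z (k + 1) := by
    rw [sum_Ioc_succ_top (by omega), ← sum_chordWeight_add (Nat.le_succ i) (by omega)]
    simp
  have := hcolour (z i) (z (i + 1)) (z k) (z (k + 1))
  rw [WeightBound, hsplit, hlast, hfirst]
  omega

lemma weightBound_of_not_sameCell (h : IsInductionArc σ z n i j) (hσ : Function.Involutive σ)
    (hlt : i + 1 < j) (hout : ¬ SameCell σ (i + 1) (j - 1)) : WeightBound σ z i j := by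
  have hrest := h.sum_le_neg_two h.isFresh_succ (Nat.lt_succ_self i) hlt hout
  have hone := chordWeight_le_one (σ := σ) (z := z) (i + 1)
  obtain ⟨r, hr⟩ := even_sum_chordWeight (z := z) hσ h.sameCell
  have hsplit : ∑ v ∈ Ioc i j, chordWeight σ z v =
      chordWeight σ z (i + 1) + ∑ v ∈ Ioc (i + 1) j, chordWeight σ z v := by
    rw [← sum_chordWeight_add (Nat.le_succ i) hlt.le]
    simp
  rw [WeightBound]
  split_ifs <;> omega

lemma weightBound (h : IsInductionArc σ z n i j) (hσ : Function.Involutive σ) :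
    WeightBound σ z i j := by
  have hij := h.lt
  by_cases hfix : σ (i + 1) = i + 1
  · obtain rfl : j = i + 1 := by
      by_contra hne
      exact h.not_sameCell (i + 1) (by omega) (by omega) (.of_apply_eq hσ hfix)
    have hjump : jump z (i + 1) = 0 ↔ z i = z (i + 1) := CharTwo.add_eq_zero
    simp [WeightBound, chordWeight, hfix, hjump]
  · have hmem := h.sameCell.apply_mem_Ioc hσ (v := i + 1) (by simp; omega)
    have hlt : i + 1 < j := by
      rw [mem_Ioc] at hmem
      omega
    by_cases hin : SameCell σ (i + 1) (j - 1)
    · exact h.weightBound_of_sameCell hσ hlt hfix hin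
    · exact h.weightBound_of_not_sameCell hσ hlt hin

end IsInductionArc

lemma IsBichromatic.weightBound (hbi : IsBichromatic σ z n) (hσ : Function.Involutive σ)
    (hij : i ≤ j) (hjn : j ≤ n) (hsame : SameCell σ i j) : WeightBound σ z i j := by
  induction hm : j - i using Nat.strong_induction_on generalizing i j with
  | _ m ihm =>
  have ih : ∀ a b, a ≤ b → b ≤ n → b - a < j - i → SameCell σ a b → WeightBound σ z a b :=
    fun a b hab hbn hlt h => ihm (b - a) (by omega) hab hbn h rfl
  rcases hij.eq_or_lt with rfl | hlt
  · simp [WeightBound]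
  by_cases hmid : ∃ s, i < s ∧ s < j ∧ SameCell σ i s
  · obtain ⟨s, his, hsj, hs⟩ := hmid
    exact (ih i s his.le (by omega) (by omega) hs).trans his.le hsj.le
      (ih s j hsj.le hjn (by omega) (hs.symm.trans hsame))
  · push Not at hmid
    exact IsInductionArc.weightBound ⟨⟨hlt, hsame, hmid⟩, hbi, hjn, ih⟩ hσ

lemma IsBichromatic.sum_chordWeight_le (hbi : IsBichromatic σ z n) (hσ : Function.Involutive σ)
    (hsame : SameCell σ 0 n) (hz : z n = z 0) : ∑ v ∈ Ioc 0 n, chordWeight σ z v ≤ -4 := by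
  obtain ⟨q, hqn, hq, hne⟩ := hbi 0 n.zero_le
  simpa [hz] using WeightBound.sum_le_of_ne q.zero_le hqn hne
    (hbi.weightBound hσ q.zero_le hqn hq) (hbi.weightBound hσ hqn le_rfl (hq.symm.trans hsame))

end Chords

section SignCharacter

variable {ι X R : Type*} [CommRing R]

/-- The sign character `a ↦ (-1) ^ a` of `ZMod 2`. -/
def signChar (R : Type*) [CommRing R] : AddChar (ZMod 2) R :=
  AddChar.zmodChar 2 (ζ := -1) (by norm_num)

lemma signChar_eq_ite (a : ZMod 2) : signChar R a = if a = 0 then 1 else -1 := by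
  by_cases ha : a = 0
  · simp [ha]
  · obtain rfl : a = 1 := Fin.eq_one_of_ne_zero a ha
    rw [if_neg ha, signChar, AddChar.zmodChar_apply, ZMod.val_one, pow_one]

lemma signChar_ne_zero [Nontrivial R] (a : ZMod 2) : signChar R a ≠ 0 := by
  rw [signChar_eq_ite]
  split_ifs <;> simp

lemma sum_signChar : ∑ a, signChar R a = 0 := by
  have huniv : (univ : Finset (ZMod 2)) = {0, 1} := rfl
  simp [huniv, signChar_eq_ite]

lemma signChar_sum (s : Finset ι) (a : ι → ZMod 2) :
    signChar R (∑ i ∈ s, a i) = ∏ i ∈ s, signChar R (a i) :=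
  map_prod (signChar R).toMonoidHom _ s

lemma prod_one_add_signChar (s : Finset ι) (a b : ι → ZMod 2) [Decidable (∀ i ∈ s, a i = b i)] :
    ∏ i ∈ s, (1 + signChar R (a i + b i)) = if ∀ i ∈ s, a i = b i then 2 ^ #s else 0 := by
  have hfactor (i : ι) : 1 + signChar R (a i + b i) = if a i = b i then 2 else 0 := by
    simp only [signChar_eq_ite, CharTwo.add_eq_zero]
    split_ifs <;> norm_num
  simp only [hfactor, prod_ite_zero, prod_const]

lemma sum_filter_eq_zero_of_signChar [NoZeroDivisors R] [CharZero R] {s : Finset ι} {t : Finset X}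
    {w : X → R} {F : ι → X → ZMod 2} (b : ι → ZMod 2)
    (h : ∀ s' ⊆ s, ∑ x ∈ t, signChar R (∑ i ∈ s', F i x) * w x = 0)
    [DecidablePred fun x => ∀ i ∈ s, F i x = b i] :
    ∑ x ∈ t with ∀ i ∈ s, F i x = b i, w x = 0 := by
  have hexpand (x : X) : ∏ i ∈ s, (1 + signChar R (F i x + b i)) =
      ∑ s' ∈ s.powerset, signChar R (∑ i ∈ s', b i) * signChar R (∑ i ∈ s', F i x) := by
    simp only [prod_one_add, AddChar.map_add_eq_mul, prod_mul_distrib, signChar_sum, mul_comm]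
  have hpow : (2 : R) ^ #s * ∑ x ∈ t with ∀ i ∈ s, F i x = b i, w x = 0 := calc
    _ = ∑ x ∈ t, (∏ i ∈ s, (1 + signChar R (F i x + b i))) * w x := by
      simp only [prod_one_add_signChar, ite_mul, zero_mul, ← sum_filter, mul_sum]
    _ = ∑ s' ∈ s.powerset, signChar R (∑ i ∈ s', b i) *
          ∑ x ∈ t, signChar R (∑ i ∈ s', F i x) * w x := by
      simp only [hexpand, sum_mul, mul_sum, mul_assoc]
      exact sum_comm
    _ = 0 := sum_eq_zero fun s' hs' => by rw [h s' (mem_powerset.1 hs'), mul_zero]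
  exact (mul_eq_zero.1 hpow).resolve_left (pow_ne_zero _ two_ne_zero)

end SignCharacter

section Boundary

variable {V E : Type} [DecidableEq V] [Fintype E] {ends : E → Sym2 V}
variable {M N : Type*} [AddCommGroup M] [AddCommGroup N]

/-- The boundary of a labelling of the edges: at each vertex, the sum of the labels of the incident
edges, with loops counted twice. -/
def boundary (ends : E → Sym2 V) : (E → M) →+ (V → M) where
  toFun f v := ∑ x, edgeCount (ends x) v • f x
  map_zero' := by
    ext v
    simp
  map_add' f g := by
    ext v
    simp [smul_add, sum_add_distrib]

lemma boundary_apply (f : E → M) (v : V) :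
    boundary ends f v = ∑ x, edgeCount (ends x) v • f x :=
  rfl

lemma isFlow_iff_boundary_eq_zero {f : E → ZMod 2 × ZMod 2} :
    IsFlow ends f ↔ boundary ends f = 0 :=
  funext_iff.symm

lemma map_boundary_apply (φ : M →+ N) (f : E → M) (v : V) :
    φ (boundary ends f v) = boundary ends (fun x => φ (f x)) v := by
  simp [boundary_apply]

lemma boundary_single [DecidableEq E] {x : E} {a b : V} (hx : ends x = s(a, b)) (c : M) :
    boundary ends (Pi.single x c) = Pi.single a c + Pi.single b c := by
  ext v
  rw [boundary_apply, sum_eq_single x (fun y _ hy => by simp [hy]) (by simp), hx]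
  simp [edgeCount, add_smul, Pi.single_apply, eq_comm]

lemma sum_boundary_eq_zero {k : E → ZMod 2} {W : Finset V}
    (hW : ∀ x, k x ≠ 0 → ∀ a ∈ ends x, ∀ b ∈ ends x, a ∈ W → b ∈ W) :
    ∑ w ∈ W, boundary ends k w = 0 := by
  simp only [boundary_apply]
  rw [sum_comm]
  refine sum_eq_zero fun x _ => ?_
  rw [← sum_smul]
  rcases eq_or_ne (k x) 0 with hx | hx
  · rw [hx, smul_zero]
  have hcount : Even (∑ w ∈ W, edgeCount (ends x) w) := by
    obtain ⟨a, b, hab⟩ : ∃ a b, ends x = s(a, b) := (ends x).ind fun a b => ⟨a, b, rfl⟩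
    have hmem : a ∈ W ↔ b ∈ W :=
      have ha : a ∈ ends x := by simp [hab]
      have hb : b ∈ ends x := by simp [hab]
      ⟨hW x hx a ha b hb, hW x hx b hb a ha⟩
    by_cases hb : b ∈ W <;> simp [hab, edgeCount, sum_add_distrib, hmem, hb]
  rw [nsmul_eq_mul, (ZMod.natCast_eq_zero_iff_even).2 hcount, zero_mul]

lemma IsEvenSub.boundary_indicator {CE : Finset E} (hCE : IsEvenSub ends CE)
    [Module (ZMod 2) M] (c : M) : boundary ends ((CE : Set E).indicator fun _ => c) = 0 := by
  ext v
  obtain ⟨k, hk⟩ := hCE v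
  have hsum : boundary ends ((CE : Set E).indicator fun _ => c) v =
      (∑ x ∈ CE, edgeCount (ends x) v) • c := by
    classical
    simp [boundary_apply, Set.indicator_apply, sum_smul]
  rw [hsum, hk, ← two_mul, mul_comm, mul_smul, two_smul, ZModModule.add_self, smul_zero,
    Pi.zero_apply]

/-- `a` and `b` are the ends of a chain of edges of `D`, that is, a sum of edges of `D` has
boundary `a + b` modulo two. -/
def Linked (ends : E → Sym2 V) (D : Set E) (a b : V) : Prop :=
  ∃ h : E → ZMod 2, Function.support h ⊆ D ∧
    boundary ends h = Pi.single a 1 + Pi.single b 1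

lemma Linked.equivalence (D : Set E) : Equivalence (Linked ends D) where
  refl a := ⟨0, by simp, by rw [map_zero, ZModModule.add_self]⟩
  symm := by
    rintro a b ⟨h, hD, hh⟩
    exact ⟨h, hD, by rw [hh, add_comm]⟩
  trans := by
    rintro a b c ⟨h, hD, hh⟩ ⟨h', hD', hh'⟩
    refine ⟨h + h', (Function.support_add h h').trans (Set.union_subset hD hD'), ?_⟩
    rw [map_add, hh, hh', ZModModule.add_add_add_cancel]

lemma Linked.of_mem_ends {D : Set E} {x : E} {a b : V} (hx : x ∈ D) (ha : a ∈ ends x)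
    (hb : b ∈ ends x) : Linked ends D a b := by
  classical
  rcases eq_or_ne a b with rfl | hne
  · exact (Linked.equivalence D).refl a
  · have hab : ends x = s(a, b) := (Sym2.mem_and_mem_iff hne).1 ⟨ha, hb⟩
    exact ⟨Pi.single x 1, Pi.support_single_subset.trans (by simpa), boundary_single hab 1⟩

end Boundary

section ClosedTrail

variable {V E : Type} {ends : E → Sym2 V} {CE : Finset E} {a b c : V} {x : E} {l l₁ l₂ : List E}

/-- `l` lists the edges of a walk from `a` to `b`. -/
inductive IsWalk (ends : E → Sym2 V) : V → V → List E → Prop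
  | nil (a : V) : IsWalk ends a a []
  | cons {a b c : V} {x : E} {l : List E} (hx : ends x = s(a, b)) (hl : IsWalk ends b c l) :
      IsWalk ends a c (x :: l)

/-- `l` lists the edges of a walk from `a` to `b` that uses only edges of `CE`, each at most
once. -/
structure IsTrail (ends : E → Sym2 V) (CE : Finset E) (a b : V) (l : List E) : Prop where
  isWalk : IsWalk ends a b l
  nodup : l.Nodup
  subset : ∀ x ∈ l, x ∈ CE

namespace IsWalk

lemma append (h₁ : IsWalk ends a b l₁) (h₂ : IsWalk ends b c l₂) :
    IsWalk ends a c (l₁ ++ l₂) := by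
  induction h₁ with
  | nil => exact h₂
  | cons hx _ ih => exact .cons hx (ih h₂)

lemma exists_append_of_mem (h : IsWalk ends a b l) (hx : x ∈ l) (hc : c ∈ ends x) :
    ∃ l₁ l₂, l = l₁ ++ l₂ ∧ IsWalk ends a c l₁ ∧ IsWalk ends c b l₂ := by
  induction h with
  | nil => simp at hx
  | @cons a a' b y l hy hl ih =>
    rcases List.mem_cons.1 hx with rfl | hx
    · rw [hy, Sym2.mem_iff] at hc
      rcases hc with rfl | rfl
      · exact ⟨[], x :: l, rfl, .nil c, .cons hy hl⟩
      · exact ⟨[x], l, rfl, .cons hy (.nil c), hl⟩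
    · obtain ⟨l₁, l₂, rfl, h₁, h₂⟩ := ih hx
      exact ⟨y :: l₁, l₂, rfl, .cons hy h₁, h₂⟩

lemma exists_vertices (h : IsWalk ends a b l) :
    ∃ v : ℕ → V, v 0 = a ∧ v l.length = b ∧
      ∀ i (hi : i < l.length), ends l[i] = s(v i, v (i + 1)) := by
  induction h with
  | nil a => exact ⟨fun _ => a, rfl, rfl, by simp⟩
  | @cons a _ _ _ _ hx _ ih =>
    obtain ⟨v, hv0, hvl, hv⟩ := ih
    refine ⟨fun i => i.casesOn a v, rfl, hvl, fun i hi => ?_⟩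
    cases i with
    | zero => simp [hx, hv0]
    | succ i => simpa using hv i (by simpa using hi)

lemma sum_edgeCount [DecidableEq V] (h : IsWalk ends a b l) (w : V) :
    (l.map fun x => (edgeCount (ends x) w : ZMod 2)).sum =
      (if a = w then 1 else 0) + if b = w then 1 else 0 := by
  induction h with
  | nil => simp [CharTwo.add_self_eq_zero]
  | @cons a b _ x _ hx _ ih =>
    have hcount : (edgeCount (ends x) w : ZMod 2) =
        (if a = w then 1 else 0) + if b = w then 1 else 0 := by
      simp [hx, edgeCount]
    rw [List.map_cons, List.sum_cons, ih, hcount, add_assoc, CharTwo.add_cancel_left]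

end IsWalk

lemma edgeCount_eq_zero [DecidableEq V] {s : Sym2 V} (h : a ∉ s) : edgeCount s a = 0 := by
  induction s with
  | h b c =>
    rw [Sym2.mem_iff, not_or] at h
    simp [edgeCount, Ne.symm h.1, Ne.symm h.2]

namespace IsTrail

lemma nil (a : V) : IsTrail ends CE a a [] :=
  ⟨.nil a, .nil, by simp⟩

lemma cons (h : IsTrail ends CE a b l) (hx : x ∈ CE) (hxl : x ∉ l) (ha : a ∈ ends x) :
    ∃ c, IsTrail ends CE c b (x :: l) := by
  obtain ⟨c, hc⟩ := ha
  exact ⟨c, .cons (hc.trans Sym2.eq_swap) h.isWalk, List.nodup_cons.2 ⟨hxl, h.nodup⟩,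
    List.forall_mem_cons.2 ⟨hx, h.subset⟩⟩

lemma length_le (h : IsTrail ends CE a b l) : l.length ≤ #CE := by
  classical
  rw [← List.toFinset_card_of_nodup h.nodup]
  exact card_le_card fun x hx => h.subset x (List.mem_toFinset.1 hx)

lemma exists_longest (h : IsTrail ends CE a b l) :
    ∃ a' b' l', IsTrail ends CE a' b' l' ∧
      ∀ a'' b'' l'', IsTrail ends CE a'' b'' l'' → l''.length ≤ l'.length := by
  obtain ⟨l', ⟨a', b', hl'⟩, hmin⟩ :=
    (measure fun l : List E => #CE - l.length).wf.has_min {l | ∃ a b, IsTrail ends CE a b l}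
      ⟨l, a, b, h⟩
  refine ⟨a', b', l', hl', fun a'' b'' l'' hl'' => ?_⟩
  have hlt : ¬ #CE - l''.length < #CE - l'.length := hmin l'' ⟨a'', b'', hl''⟩
  have := hl''.length_le
  omega

lemma exists_perm_of_mem (h : IsTrail ends CE a a l) (hx : x ∈ l) (hc : c ∈ ends x) :
    ∃ l', l'.Perm l ∧ IsTrail ends CE c c l' := by
  obtain ⟨l₁, l₂, rfl, h₁, h₂⟩ := h.isWalk.exists_append_of_mem hx hc
  have hperm : (l₂ ++ l₁).Perm (l₁ ++ l₂) := List.perm_append_comm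
  exact ⟨_, hperm, h₂.append h₁, hperm.nodup_iff.2 h.nodup,
    fun y hy => h.subset y (hperm.mem_iff.1 hy)⟩

lemma exists_edge_of_ne [DecidableEq V] (h : IsTrail ends CE a b l) (hCE : IsEvenSub ends CE)
    (hab : a ≠ b) : ∃ x ∈ CE, x ∉ l ∧ a ∈ ends x := by
  classical
  by_contra! hnone
  have hsum : ∑ x ∈ l.toFinset, edgeCount (ends x) a = ∑ x ∈ CE, edgeCount (ends x) a :=
    sum_subset (fun x hx => h.subset x (List.mem_toFinset.1 hx)) fun x hx hxl =>
      edgeCount_eq_zero (hnone x hx (by simpa using hxl))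
  have hzero : (l.map fun x => (edgeCount (ends x) a : ZMod 2)).sum = 0 := by
    rw [← List.sum_toFinset _ h.nodup, ← Nat.cast_sum, hsum, ZMod.natCast_eq_zero_iff_even]
    exact hCE a
  simp [h.isWalk.sum_edgeCount, hab.symm] at hzero

end IsTrail

/-- The edges `e 0, …, e (n - 1)` list `CE` without repetition and form a closed trail through the
vertices `v 0, …, v n`. The edge `e i` joins `v i` to `v (i + 1)`, so that `v i` lies between
`e (i - 1)` and `e i`; the values `e n = e 0` and `v n = v 0` close the trail. -/
structure IsClosedTrail (ends : E → Sym2 V) (CE : Finset E) (n : ℕ) (e : ℕ → E) (v : ℕ → V) :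
    Prop where
  pos : 0 < n
  bijOn : Set.BijOn e (range n) CE
  ends_eq : ∀ i < n, ends (e i) = s(v i, v (i + 1))
  edge_eq : e n = e 0
  vertex_eq : v n = v 0

lemma IsTrail.exists_isClosedTrail (h : IsTrail ends CE a a l) (hne : l ≠ [])
    (hCE : ∀ x ∈ CE, x ∈ l) : ∃ e v, IsClosedTrail ends CE l.length e v := by
  obtain ⟨v, hv0, hvl, hv⟩ := h.isWalk.exists_vertices
  have hpos : 0 < l.length := List.length_pos_iff.2 hne
  have hget : ∀ i (hi : i < l.length), l[i % l.length]'(Nat.mod_lt i hpos) = l[i] :=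
    fun i hi => by simp only [Nat.mod_eq_of_lt hi]
  refine ⟨fun i => l[i % l.length]'(Nat.mod_lt i hpos), v, hpos, ⟨?_, ?_, ?_⟩, ?_, ?_, ?_⟩
  · exact fun i _ => h.subset _ (List.getElem_mem _)
  · intro i hi j hj hij
    simp only [coe_range, Set.mem_Iio] at hi hj
    simp only [hget i hi, hget j hj] at hij
    exact (h.nodup.getElem_inj_iff).1 hij
  · intro x hx
    obtain ⟨i, hi, rfl⟩ := List.getElem_of_mem (hCE x hx)
    exact ⟨i, by simpa, hget i hi⟩
  · exact fun i hi => by simp only [hget i hi, hv i hi]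
  · simp
  · rw [hvl, hv0]

namespace IsClosedTrail

variable {n q : ℕ} {e : ℕ → E} {v : ℕ → V}

lemma edge_mem (h : IsClosedTrail ends CE n e v) (hq : q ≤ n) : e q ∈ CE := by
  rcases hq.eq_or_lt with rfl | hq
  · rw [h.edge_eq]
    exact h.bijOn.mapsTo (by simpa using h.pos)
  · exact h.bijOn.mapsTo (by simpa using hq)

lemma exists_index (h : IsClosedTrail ends CE n e v) (hx : x ∈ CE) : ∃ q ≤ n, e q = x := by
  obtain ⟨q, hq, rfl⟩ := h.bijOn.surjOn hx
  exact ⟨q, by simpa using (mem_range.1 hq).le, rfl⟩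

lemma vertex_mem (h : IsClosedTrail ends CE n e v) (hq : q ∈ Ioc 0 n) :
    v q ∈ ends (e (q - 1)) := by
  rw [mem_Ioc] at hq
  rw [h.ends_eq (q - 1) (by omega), Nat.sub_add_cancel hq.1]
  exact Sym2.mem_mk_right _ _

lemma exists_comp_eq {M : Type*} (h : IsClosedTrail ends CE n e v) (a : ℕ → M)
    (ha : a n = a 0) : ∃ A : E → M, ∀ q ≤ n, A (e q) = a q := by
  have hinv : ∀ q < n, Function.invFunOn e (range n) (e q) = q :=
    fun q hq => h.bijOn.injOn.leftInvOn_invFunOn (by simpa using hq)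
  refine ⟨fun x => a (Function.invFunOn e (range n) x), fun q hq => ?_⟩
  rcases hq.eq_or_lt with rfl | hq
  · simp only [h.edge_eq, hinv 0 h.pos, ha]
  · simp only [hinv q hq]

end IsClosedTrail

variable [DecidableEq V]

/-- A connected nonempty even subgraph, given by its edge set. -/
structure IsEulerian (ends : E → Sym2 V) (CE : Finset E) : Prop where
  nonempty : CE.Nonempty
  isEvenSub : IsEvenSub ends CE
  connected : ∀ x ∈ CE, ∀ y ∈ CE,
    Relation.ReflTransGen (fun a b => ∃ v : V, v ∈ ends a ∧ v ∈ ends b ∧ a ∈ CE ∧ b ∈ CE) x y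

lemma IsCircuit.isEulerian (hC : IsCircuit ends CE) : IsEulerian ends CE where
  nonempty := hC.1
  isEvenSub v := by rcases hC.2.1 v with h | h <;> simp [h]
  connected := hC.2.2

lemma IsEulerian.exists_trail (hC : IsEulerian ends CE) :
    ∃ a l, l ≠ [] ∧ IsTrail ends CE a a l ∧ ∀ x ∈ CE, x ∈ l := by
  obtain ⟨x₀, hx₀⟩ := hC.nonempty
  obtain ⟨a₀, ha₀⟩ : ∃ a, a ∈ ends x₀ := (ends x₀).ind fun a b => ⟨a, by simp⟩
  obtain ⟨c₀, hc₀⟩ := (IsTrail.nil a₀).cons hx₀ (by simp) ha₀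
  obtain ⟨a, b, l, hl, hmax⟩ := hc₀.exists_longest
  have hne : l ≠ [] := List.length_pos_iff.1 (hmax _ _ _ hc₀)
  have hmem : ∀ {a' b' l' x}, IsTrail ends CE a' b' l' → l'.length = l.length → x ∈ CE →
      a' ∈ ends x → x ∈ l' := by
    intro a' b' l' x h hlen hx ha
    by_contra hxl
    obtain ⟨c, hc⟩ := h.cons hx hxl ha
    have := hmax c b' _ hc
    simp only [List.length_cons] at this
    omega
  obtain rfl : a = b := by
    by_contra hab
    obtain ⟨x, hx, hxl, ha⟩ := hl.exists_edge_of_ne hC.isEvenSub hab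
    exact hxl (hmem hl rfl hx ha)
  have hx₁ : l.head hne ∈ l := l.head_mem hne
  refine ⟨a, l, hne, hl, fun y hy => ?_⟩
  induction hC.connected _ (hl.subset _ hx₁) y hy with
  | refl => exact hx₁
  | tail _ hstep ih =>
    obtain ⟨c, hcx, hcy, hx, hy⟩ := hstep
    obtain ⟨l', hperm, hl'⟩ := hl.exists_perm_of_mem (ih hx) hcx
    exact hperm.mem_iff.1 (hmem hl' hperm.length_eq hy hcy)

lemma IsEulerian.exists_isClosedTrail (hC : IsEulerian ends CE) :
    ∃ n e v, IsClosedTrail ends CE n e v := by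
  obtain ⟨a, l, hne, hl, hCE⟩ := hC.exists_trail
  exact ⟨l.length, hl.exists_isClosedTrail hne hCE⟩

lemma sum_range_single_add_single {M : Type*} [AddCommGroup M] (v : ℕ → V) (z : ℕ → M) (k : ℕ) :
    ∑ i ∈ range k, (Pi.single (v i) (z i) + Pi.single (v (i + 1)) (z i) : V → M) +
        Pi.single (v k) (z k) =
      ∑ i ∈ Ioc 0 k, Pi.single (v i) (jump z i) + Pi.single (v 0) (z 0) := by
  induction k with
  | zero => simp
  | succ k ih =>
    have hjump : (Pi.single (v (k + 1)) (jump z (k + 1)) : V → M) =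
        Pi.single (v (k + 1)) (z k) + Pi.single (v (k + 1)) (z (k + 1)) :=
      Pi.single_add _ _ _
    rw [sum_range_succ, sum_Ioc_succ_top k.zero_le, add_right_comm (∑ i ∈ Ioc 0 k, _), ← ih,
      hjump]
    abel

lemma IsClosedTrail.boundary_indicator [Fintype E] {M : Type*} [AddCommGroup M] {n : ℕ}
    {e : ℕ → E} {v : ℕ → V} (h : IsClosedTrail ends CE n e v) (g : E → M) :
    boundary ends ((CE : Set E).indicator g) =
      ∑ i ∈ Ioc 0 n, Pi.single (v i) (jump (g ∘ e) i) := by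
  classical
  have hind : (CE : Set E).indicator g = ∑ i ∈ range n, Pi.single (e i) (g (e i)) := by
    have hsum : (CE : Set E).indicator g = ∑ x ∈ CE, Pi.single x (g x) := by
      ext y
      simp [Set.indicator_apply, Pi.single_apply]
    rw [hsum, ← sum_nbij e h.bijOn.mapsTo h.bijOn.injOn h.bijOn.surjOn fun _ _ => rfl]
  have hedge : ∀ i ∈ range n, boundary ends (Pi.single (e i) (g (e i))) =
      Pi.single (v i) (g (e i)) + Pi.single (v (i + 1)) (g (e i)) :=
    fun i hi => boundary_single (h.ends_eq i (mem_range.1 hi)) _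
  have htelescope := sum_range_single_add_single v (g ∘ e) n
  simp only [Function.comp_apply, h.edge_eq, h.vertex_eq, add_left_inj] at htelescope
  rw [hind, map_sum, sum_congr rfl hedge, htelescope]

lemma IsClosedTrail.boundary_indicator_compl [Fintype E] {M : Type*} [AddCommGroup M]
    [Module (ZMod 2) M] {n : ℕ} {e : ℕ → E} {v : ℕ → V} (h : IsClosedTrail ends CE n e v)
    {g : E → M} (hg : boundary ends g = 0) :
    boundary ends ((CE : Set E)ᶜ.indicator g) =
      ∑ i ∈ Ioc 0 n, Pi.single (v i) (jump (g ∘ e) i) := by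
  rw [← Set.indicator_compl_add_self (CE : Set E) g, map_add, h.boundary_indicator] at hg
  rw [eq_neg_of_add_eq_zero_left hg, ZModModule.neg_eq_self]

end ClosedTrail

section Admissible

variable {V E : Type} [DecidableEq V] [Fintype E] {ends : E → Sym2 V} {CE : Finset E}
  {g : E → ZMod 2 × ZMod 2}

/-- A `ℤ₂ × ℤ₂`-flow that is nonzero off `CE`. -/
structure IsAdmissible (ends : E → Sym2 V) (CE : Finset E) (g : E → ZMod 2 × ZMod 2) : Prop where
  isFlow : IsFlow ends g
  ne_zero : ∀ x ∉ CE, g x ≠ 0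

/-- The cycles along which the second coordinate of a flow `g` may be flipped: the labellings modulo
two without boundary that are supported on `CE` and the edges where the first coordinate of `g` is
nonzero. -/
def flipCycles (ends : E → Sym2 V) (CE : Finset E) (g : E → ZMod 2 × ZMod 2) :
    AddSubmonoid (E → ZMod 2) where
  carrier := {h | boundary ends h = 0 ∧ ∀ x ∉ CE, (g x).1 = 0 → h x = 0}
  zero_mem' := by simp
  add_mem' := by
    rintro h h' ⟨hb, hs⟩ ⟨hb', hs'⟩
    refine ⟨by rw [map_add, hb, hb', add_zero], fun x hx hgx => ?_⟩
    rw [Pi.add_apply, hs x hx hgx, hs' x hx hgx, add_zero]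

/-- The flow obtained from `g` by flipping the second coordinate along `h`. -/
def flipSnd (g : E → ZMod 2 × ZMod 2) (h : E → ZMod 2) (x : E) : ZMod 2 × ZMod 2 :=
  g x + (0, h x)

lemma IsFlow.boundary_fst (hg : IsFlow ends g) : boundary ends (fun x => (g x).1) = 0 := by
  ext1 v
  rw [isFlow_iff_boundary_eq_zero] at hg
  exact (map_boundary_apply (AddMonoidHom.fst (ZMod 2) (ZMod 2)) g v).symm.trans (by simp [hg])

lemma IsAdmissible.map (hg : IsAdmissible ends CE g)
    (φ : ZMod 2 × ZMod 2 ≃+ ZMod 2 × ZMod 2) : IsAdmissible ends CE fun x => φ (g x) where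
  isFlow v := by
    have hv : boundary ends g v = 0 := hg.isFlow v
    rw [← boundary_apply]
    exact (map_boundary_apply φ.toAddMonoidHom g v).symm.trans (by simp [hv])
  ne_zero x hx := by simpa using hg.ne_zero x hx

lemma IsAdmissible.add_indicator (hg : IsAdmissible ends CE g) (hCE : IsEvenSub ends CE)
    (c : ZMod 2 × ZMod 2) : IsAdmissible ends CE (g + (CE : Set E).indicator fun _ => c) where
  isFlow := by
    rw [isFlow_iff_boundary_eq_zero, map_add, hCE.boundary_indicator,
      isFlow_iff_boundary_eq_zero.1 hg.isFlow, add_zero]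
  ne_zero x hx := by simpa [hx] using hg.ne_zero x hx

lemma isAdmissible_flipSnd (hg : IsAdmissible ends CE g) {h : E → ZMod 2}
    (hh : h ∈ flipCycles ends CE g) : IsAdmissible ends CE (flipSnd g h) where
  isFlow := by
    have hsnd : boundary ends (fun x => ((0 : ZMod 2), h x)) = 0 := by
      ext1 v
      exact (map_boundary_apply (AddMonoidHom.inr (ZMod 2) (ZMod 2)) h v).symm.trans
        (by simp [hh.1])
    have hflip : flipSnd g h = g + fun x => (0, h x) := rfl
    rw [isFlow_iff_boundary_eq_zero, hflip, map_add, hsnd,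
      isFlow_iff_boundary_eq_zero.1 hg.isFlow, add_zero]
  ne_zero x hx h0 := by
    have hfst : (g x).1 = 0 := by simpa [flipSnd] using congrArg Prod.fst h0
    exact hg.ne_zero x hx (by simpa [flipSnd, hh.2 x hx hfst, Prod.mk_zero_zero] using h0)

end Admissible

section Balanced

variable {V E ι : Type} {CE : Finset E} {g : E → ZMod 2 × ZMod 2}
variable {R : Type*} [CommRing R] [LinearOrder R] [IsStrictOrderedRing R] {ω : E → R}

/-- Each element of `ℤ₂ × ℤ₂` is the value of `g` on a quarter of the weight of `CE`. -/
def IsBalanced (CE : Finset E) (ω : E → R) (g : E → ZMod 2 × ZMod 2) : Prop :=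
  ∀ c, 4 * ∑ x ∈ CE with g x = c, ω x = ∑ x ∈ CE, ω x

lemma isBalanced_of_forall_le (h : ∀ c, ∑ x ∈ CE, ω x ≤ 4 * ∑ x ∈ CE with g x = c, ω x) :
    IsBalanced CE ω g := by
  have hsum : ∑ _c : ZMod 2 × ZMod 2, ∑ x ∈ CE, ω x =
      ∑ c, 4 * ∑ x ∈ CE with g x = c, ω x := by
    rw [← mul_sum, sum_fiberwise, sum_const, card_univ, Fintype.card_prod, ZMod.card]
    norm_num
  intro c
  exact ((sum_eq_sum_iff_of_le fun c _ => h c).1 hsum c (mem_univ c)).symm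

lemma IsBalanced.sum_signChar_mul (h : IsBalanced CE ω g) (a : ZMod 2) :
    ∑ x ∈ CE with (g x).1 = a, signChar R (g x).2 * ω x = 0 := by
  have hfiber : ∀ b : ZMod 2, ∑ x ∈ CE with (g x).1 = a ∧ (g x).2 = b,
      signChar R (g x).2 * ω x = signChar R b * ∑ x ∈ CE with g x = (a, b), ω x := by
    intro b
    simp only [Prod.ext_iff, mul_sum]
    exact sum_congr rfl fun x hx => by rw [(mem_filter.1 hx).2.2]
  have hfour : 4 * ∑ x ∈ CE with (g x).1 = a, signChar R (g x).2 * ω x = 0 := calc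
    _ = ∑ b, signChar R b * (4 * ∑ x ∈ CE with g x = (a, b), ω x) := by
      rw [← sum_fiberwise _ fun x => (g x).2, mul_sum]
      exact sum_congr rfl fun b _ => by rw [filter_filter, hfiber, mul_left_comm]
    _ = 0 := by
      simp only [h _, ← sum_mul, sum_signChar, zero_mul]
  simpa using hfour

lemma exists_snd_ne_of_isBalanced_flipSnd [DecidableEq V] [Fintype E] {ends : E → Sym2 V}
    (hbal : ∀ h ∈ flipCycles ends CE g, IsBalanced CE ω (flipSnd g h)) (hω : ∀ x ∈ CE, 0 < ω x)
    {s : Finset ι} {H : ι → E → ZMod 2} (hH : ∀ i ∈ s, H i ∈ flipCycles ends CE g) {x : E}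
    (hx : x ∈ CE) : ∃ y ∈ CE, (∀ i ∈ s, H i y = H i x) ∧ (g y).2 ≠ (g x).2 := by
  classical
  by_contra! hnone
  set t := CE.filter fun y => (g y).1 = (g x).1
  have hflip : ∀ s' ⊆ s,
      ∑ y ∈ t, signChar R (∑ i ∈ s', H i y) * (signChar R (g y).2 * ω y) = 0 := by
    intro s' hs'
    have h := (hbal _ (sum_mem fun i hi => hH i (hs' hi))).sum_signChar_mul (g x).1
    simpa [flipSnd, AddChar.map_add_eq_mul, mul_comm, mul_left_comm] using h
  have hsum := sum_filter_eq_zero_of_signChar (fun i => H i x) hflip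
  have hconst : ∑ y ∈ t with ∀ i ∈ s, H i y = H i x, signChar R (g y).2 * ω y =
      signChar R (g x).2 * ∑ y ∈ t with ∀ i ∈ s, H i y = H i x, ω y := by
    rw [mul_sum]
    refine sum_congr rfl fun y hy => ?_
    obtain ⟨hyt, hyH⟩ := mem_filter.1 hy
    rw [hnone y (mem_filter.1 hyt).1 hyH]
  have hpos : 0 < ∑ y ∈ t with ∀ i ∈ s, H i y = H i x, ω y := by
    refine sum_pos (fun y hy => hω y (mem_filter.1 (mem_filter.1 hy).1).1) ⟨x, ?_⟩
    simp [t, hx]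
  rw [hconst] at hsum
  exact mul_ne_zero (signChar_ne_zero _) hpos.ne' hsum

end Balanced

section ChordDiagram

variable {V E : Type} [DecidableEq V] [Fintype E] {ends : E → Sym2 V} {CE : Finset E}
  {g : E → ZMod 2 × ZMod 2} {n : ℕ} {e : ℕ → E} {v : ℕ → V} {σ : ℕ → ℕ}

/-- A chord diagram `σ` on the positions `1, …, n` of a closed trail `e` at which the first
coordinate of `g` jumps, such that one side of each chord extends to a cycle along which the second
coordinate of `g` may be flipped. -/
structure IsChordDiagram (ends : E → Sym2 V) (CE : Finset E) (g : E → ZMod 2 × ZMod 2) (n : ℕ)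
    (e : ℕ → E) (σ : ℕ → ℕ) : Prop where
  involutive : Function.Involutive σ
  apply_ne_iff : ∀ i, σ i ≠ i ↔ i ∈ Ioc 0 n ∧ (jump (g ∘ e) i).1 ≠ 0
  exists_flipCycle : ∀ u, ∃ h ∈ flipCycles ends CE g, ∀ q ≤ n,
    h (e q) = if q ∈ Ico u (σ u) then 1 else 0

lemma sum_zmod_two_eq_card {ι : Type*} (s : Finset ι) (c : ι → ZMod 2) :
    ∑ i ∈ s, c i = #{i ∈ s | c i ≠ 0} := by
  have hc : ∀ a : ZMod 2, a = if a ≠ 0 then 1 else 0 := by decide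
  rw [← sum_boole]
  exact sum_congr rfl fun i _ => hc (c i)

lemma jump_arc {u w i : ℕ} (huw : u ≤ w) (hi : 0 < i) :
    jump (fun q => if q ∈ Ico u w then (1 : ZMod 2) else 0) i =
      (if i = u then 1 else 0) + if i = w then 1 else 0 := by
  rcases huw.eq_or_lt with rfl | huw
  · simp [jump, CharTwo.add_self_eq_zero]
  have hpred : i - 1 ∈ Ico u w ↔ u < i ∧ i ≤ w := by
    rw [mem_Ico]
    omega
  simp only [jump, hpred, mem_Ico]
  split_ifs <;> first | omega | decide

namespace IsClosedTrail

lemma exists_flipCycle (h : IsClosedTrail ends CE n e v) {u w : ℕ} (hu : 0 < u) (huw : u ≤ w)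
    (hwn : w ≤ n) (hlink : Linked ends {x | x ∉ CE ∧ (g x).1 ≠ 0} (v u) (v w)) :
    ∃ h ∈ flipCycles ends CE g, ∀ q ≤ n, h (e q) = if q ∈ Ico u w then 1 else 0 := by
  obtain ⟨k, hk, hbk⟩ := hlink
  obtain ⟨A, hA⟩ := h.exists_comp_eq (fun q => if q ∈ Ico u w then (1 : ZMod 2) else 0)
    (by simp [hwn, hu.ne'])
  have hbA : boundary ends ((CE : Set E).indicator A) = Pi.single (v u) 1 + Pi.single (v w) 1 := by
    have hjump : ∀ i ∈ Ioc 0 n, (Pi.single (v i) (jump (A ∘ e) i) : V → ZMod 2) =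
        (if i = u then Pi.single (v i) 1 else 0) + if i = w then Pi.single (v i) 1 else 0 := by
      intro i hi
      rw [mem_Ioc] at hi
      have hi' : jump (A ∘ e) i = _ := congrArg₂ (· + ·) (hA (i - 1) (by omega)) (hA i hi.2)
      rw [hi'.trans (jump_arc huw hi.1), Pi.single_add]
      split_ifs <;> simp
    have hmem : u ∈ Ioc 0 n ∧ w ∈ Ioc 0 n := by
      simp only [mem_Ioc]
      omega
    rw [h.boundary_indicator, sum_congr rfl hjump, sum_add_distrib, sum_ite_eq', sum_ite_eq',
      if_pos hmem.1, if_pos hmem.2]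
  refine ⟨k + (CE : Set E).indicator A, ⟨?_, fun x hx hgx => ?_⟩, fun q hq => ?_⟩
  · rw [map_add, hbk, hbA, ZModModule.add_self]
  · have hkx : k x = 0 := Function.notMem_support.1 fun hmem => (hk hmem).2 hgx
    simp [hkx, hx]
  · have hkq : k (e q) = 0 := Function.notMem_support.1 fun hmem => (hk hmem).1 (h.edge_mem hq)
    simp [hkq, h.edge_mem hq, hA q hq]

open scoped Classical in
lemma even_card_jumps_linked (h : IsClosedTrail ends CE n e v) (hg : IsFlow ends g) (a : V) :
    Even #{i ∈ Ioc 0 n | (jump (g ∘ e) i).1 ≠ 0 ∧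
      Linked ends {x | x ∉ CE ∧ (g x).1 ≠ 0} a (v i)} := by
  set D : Set E := {x | x ∉ CE ∧ (g x).1 ≠ 0}
  set W : Finset V := {w ∈ univ.biUnion fun x => (ends x).toFinset | Linked ends D a w}
  have hW : ∀ i ∈ Ioc 0 n, v i ∈ W ↔ Linked ends D a (v i) := fun i hi => by
    simpa [W] using fun _ => ⟨_, h.vertex_mem hi⟩
  have hk := h.boundary_indicator_compl hg.boundary_fst
  have hsum : ∑ w ∈ W, boundary ends ((CE : Set E)ᶜ.indicator fun x => (g x).1) w = 0 := by
    refine sum_boundary_eq_zero fun x hx b hb c hc hbW => ?_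
    have hxD : x ∈ D := by simpa [D] using hx
    simp only [W, mem_filter, mem_biUnion, mem_univ, true_and, Sym2.mem_toFinset] at hbW ⊢
    exact ⟨⟨x, hc⟩, (Linked.equivalence D).trans hbW.2 (.of_mem_ends hxD hb hc)⟩
  rw [← ZMod.natCast_eq_zero_iff_even]
  calc
    _ = ∑ i ∈ Ioc 0 n with Linked ends D a (v i), (jump (g ∘ e) i).1 := by
      rw [sum_zmod_two_eq_card, filter_filter]
      simp only [and_comm]
    _ = ∑ w ∈ W, boundary ends ((CE : Set E)ᶜ.indicator fun x => (g x).1) w := by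
      simp only [hk, Finset.sum_apply]
      rw [sum_comm]
      simp only [sum_pi_single', ← sum_filter, filter_congr hW]
      rfl
    _ = 0 := hsum

lemma exists_isChordDiagram (h : IsClosedTrail ends CE n e v) (hg : IsFlow ends g) :
    ∃ σ, IsChordDiagram ends CE g n e σ := by
  classical
  set D : Set E := {x | x ∉ CE ∧ (g x).1 ≠ 0}
  obtain ⟨σ, hσ, hmoved, hlinked⟩ := exists_involutive_of_even_classes
    ((Linked.equivalence (ends := ends) D).comap v) {i ∈ Ioc 0 n | (jump (g ∘ e) i).1 ≠ 0}
    fun i _ => by simpa [filter_filter] using h.even_card_jumps_linked hg (v i)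
  simp only [mem_filter] at hmoved
  refine ⟨σ, hσ, hmoved, fun u => ?_⟩
  rcases lt_or_ge u (σ u) with hu | hu
  · obtain ⟨hun, -⟩ := (hmoved u).1 hu.ne'
    obtain ⟨hσn, -⟩ := (hmoved (σ u)).1 (by rw [hσ u]; exact hu.ne)
    exact h.exists_flipCycle (mem_Ioc.1 hun).1 hu.le (mem_Ioc.1 hσn).2 (hlinked u)
  · exact ⟨0, zero_mem _, by simp [Ico_eq_empty_of_le hu]⟩

end IsClosedTrail

end ChordDiagram

section Descent

lemma jump_flipSnd_comp {E : Type} (g : E → ZMod 2 × ZMod 2) (k : E → ZMod 2) (e : ℕ → E) (i : ℕ) :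
    jump (flipSnd g k ∘ e) i = jump (g ∘ e) i + (0, jump (k ∘ e) i) :=
  (add_add_add_comm _ _ _ _).trans (by simp [jump])

variable {V E : Type} [DecidableEq V] [Fintype E] {ends : E → Sym2 V} {CE : Finset E}
  {g : E → ZMod 2 × ZMod 2} {n : ℕ} {e : ℕ → E} {v : ℕ → V} {σ : ℕ → ℕ}
variable {R : Type*} [CommRing R] [LinearOrder R] [IsStrictOrderedRing R] {ω : E → R}

/-- The positions `1, …, n` at which only the second coordinate of `g` jumps; their number is the
quantity that decreases in the descent. -/
def sndJumps (g : E → ZMod 2 × ZMod 2) (n : ℕ) (e : ℕ → E) : Finset ℕ :=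
  {i ∈ Ioc 0 n | jump (g ∘ e) i = (0, 1)}

/-- The ends of the mixed chords of `σ`, that is, of those with a jump of the second coordinate of
`g` at exactly one end. -/
def mixedEnds (g : E → ZMod 2 × ZMod 2) (n : ℕ) (e : ℕ → E) (σ : ℕ → ℕ) : Finset ℕ :=
  {i ∈ Ioc 0 n | σ i ≠ i ∧ (jump (g ∘ e) i).2 ≠ (jump (g ∘ e) (σ i)).2}

namespace IsChordDiagram

lemma apply_mem_Ioc (h : IsChordDiagram ends CE g n e σ) {i : ℕ} (hi : σ i ≠ i) :
    σ i ∈ Ioc 0 n :=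
  ((h.apply_ne_iff (σ i)).1 (h.involutive.injective.ne hi)).1

lemma sameCell_zero (h : IsChordDiagram ends CE g n e σ) : SameCell σ 0 n := by
  intro u
  by_cases hu : σ u = u
  · simp [hu]
  · have hmem := mem_Ioc.1 ((h.apply_ne_iff u).1 hu).1
    have hσmem := mem_Ioc.1 (h.apply_mem_Ioc hu)
    simp only [mem_Ico]
    omega

lemma isBichromatic (h : IsChordDiagram ends CE g n e σ) (he : IsClosedTrail ends CE n e v)
    (hω : ∀ x ∈ CE, 0 < ω x)
    (hbal : ∀ k ∈ flipCycles ends CE g, IsBalanced CE ω (flipSnd g k)) :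
    IsBichromatic σ (fun i => (g (e i)).2) n := by
  choose H hH hHe using h.exists_flipCycle
  intro p hp
  obtain ⟨y, hy, hyH, hne⟩ := exists_snd_ne_of_isBalanced_flipSnd hbal hω
    (s := Ioc 0 n) (fun u _ => hH u) (he.edge_mem hp)
  obtain ⟨q, hq, rfl⟩ := he.exists_index hy
  refine ⟨q, hq, fun u => ?_, hne⟩
  by_cases hu : σ u = u
  · simp [hu]
  · have hHu := hyH u ((h.apply_ne_iff u).1 hu).1
    rw [hHe u q hq, hHe u p hp] at hHu
    split_ifs at hHu with hqu hpu hpu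
    · exact iff_of_true hpu hqu
    · exact absurd hHu one_ne_zero
    · exact absurd hHu zero_ne_one
    · exact iff_of_false hpu hqu

lemma chordWeight_eq (h : IsChordDiagram ends CE g n e σ) {i : ℕ} (hi : i ∈ Ioc 0 n) :
    chordWeight σ (fun i => (g (e i)).2) i =
      (if σ i ≠ i ∧ (jump (g ∘ e) i).2 ≠ (jump (g ∘ e) (σ i)).2 then 1 else 0) -
        2 * if jump (g ∘ e) i = (0, 1) then 1 else 0 := by
  have hsnd (i : ℕ) : jump (fun i => (g (e i)).2) i = (jump (g ∘ e) i).2 := rfl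
  have hone (a : ZMod 2) : a = 1 ↔ a ≠ 0 := by decide +revert
  by_cases hfix : σ i = i
  · have hfst : (jump (g ∘ e) i).1 = 0 := by
      simpa [hi, hfix] using (h.apply_ne_iff i).not
    simp [chordWeight, hfix, hsnd, Prod.ext_iff, hfst, hone, apply_ite]
  · have hfst : (jump (g ∘ e) i).1 ≠ 0 := ((h.apply_ne_iff i).1 hfix).2
    simp [chordWeight, hfix, hsnd, Prod.ext_iff, hfst]

lemma sum_chordWeight (h : IsChordDiagram ends CE g n e σ) :
    ∑ i ∈ Ioc 0 n, chordWeight σ (fun i => (g (e i)).2) i =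
      #(mixedEnds g n e σ) - 2 * #(sndJumps g n e) := by
  rw [sum_congr rfl fun i hi => h.chordWeight_eq hi, sum_sub_distrib, ← mul_sum, sum_boole,
    sum_boole]
  rfl

lemma card_mixedEnds_add_four_le (h : IsChordDiagram ends CE g n e σ)
    (he : IsClosedTrail ends CE n e v) (hω : ∀ x ∈ CE, 0 < ω x)
    (hbal : ∀ k ∈ flipCycles ends CE g, IsBalanced CE ω (flipSnd g k)) :
    #(mixedEnds g n e σ) + 4 ≤ 2 * #(sndJumps g n e) := by
  have hsum := (h.isBichromatic he hω hbal).sum_chordWeight_le h.involutive h.sameCell_zero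
    (by simp only [he.edge_eq])
  rw [h.sum_chordWeight] at hsum
  omega

lemma two_mul_card_filter_mixedEnds_le (h : IsChordDiagram ends CE g n e σ) :
    2 * #{i ∈ mixedEnds g n e σ | (jump (g ∘ e) i).2 = 0} ≤ #(mixedEnds g n e σ) := by
  have hle : #{i ∈ mixedEnds g n e σ | (jump (g ∘ e) i).2 = 0} ≤
      #{i ∈ mixedEnds g n e σ | ¬ (jump (g ∘ e) i).2 = 0} := by
    refine card_le_card_of_injOn σ (fun i hi => ?_) h.involutive.injective.injOn
    simp only [mixedEnds, coe_filter, mem_filter, Set.mem_ofPred_eq] at hi ⊢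
    obtain ⟨⟨-, hmoved, hne⟩, hzero⟩ := hi
    refine ⟨⟨h.apply_mem_Ioc hmoved, h.involutive.injective.ne hmoved, ?_⟩, ?_⟩
    · rw [h.involutive i]
      exact hne.symm
    · exact fun h0 => hne (hzero.trans h0.symm)
  have := card_filter_add_card_filter_not (s := mixedEnds g n e σ)
    fun i => (jump (g ∘ e) i).2 = 0
  omega

lemma exists_flipCycle_of_finset (h : IsChordDiagram ends CE g n e σ) {S : Finset ℕ}
    (hS : ∀ u ∈ S, u ≤ σ u) : ∃ k ∈ flipCycles ends CE g, ∀ i ∈ Ioc 0 n,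
      jump (k ∘ e) i = (if i ∈ S then 1 else 0) + if σ i ∈ S then 1 else 0 := by
  choose H hH hHe using h.exists_flipCycle
  refine ⟨∑ u ∈ S, H u, sum_mem fun u _ => hH u, fun i hi => ?_⟩
  have hjump : ∀ u ∈ S, H u (e (i - 1)) + H u (e i) =
      (if i = u then 1 else 0) + if σ i = u then 1 else 0 := by
    intro u hu
    rw [mem_Ioc] at hi
    rw [hHe u _ (by omega), hHe u _ hi.2]
    simp only [h.involutive.eq_iff]
    exact jump_arc (hS u hu) hi.1
  simp only [jump, Function.comp_apply, Finset.sum_apply]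
  rw [← sum_add_distrib, sum_congr rfl hjump, sum_add_distrib, sum_ite_eq, sum_ite_eq]

lemma exists_flipCycle_forall_mem_mixedEnds (h : IsChordDiagram ends CE g n e σ) :
    ∃ k ∈ flipCycles ends CE g, ∀ i ∈ Ioc 0 n, jump (flipSnd g k ∘ e) i = (1, 0) →
      i ∈ mixedEnds g n e σ ∧ (jump (g ∘ e) i).2 = 0 := by
  set S : Finset ℕ :=
    {u ∈ Ioc 0 n | u < σ u ∧ (jump (g ∘ e) u).2 = 0 ∧ (jump (g ∘ e) (σ u)).2 = 0}
  have hSmem {i : ℕ} (hi : i ∈ Ioc 0 n) :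
      i ∈ S ↔ i < σ i ∧ (jump (g ∘ e) i).2 = 0 ∧ (jump (g ∘ e) (σ i)).2 = 0 := by
    rw [mem_filter, and_iff_right hi]
  obtain ⟨k, hk, hjump⟩ := h.exists_flipCycle_of_finset (S := S) fun u hu =>
    (mem_filter.1 hu).2.1.le
  refine ⟨k, hk, fun i hi hi10 => ?_⟩
  rw [jump_flipSnd_comp, hjump i hi, Prod.ext_iff] at hi10
  obtain ⟨hfst, hsnd⟩ := hi10
  have hmoved : σ i ≠ i := (h.apply_ne_iff i).2 ⟨hi, by simp_all⟩
  have hcolour : ∀ a b : ZMod 2, a + (if a = 0 ∧ b = 0 then 1 else 0) = 0 → a ≠ b ∧ a = 0 := by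
    decide
  have hends : (jump (g ∘ e) i).2 ≠ (jump (g ∘ e) (σ i)).2 ∧ (jump (g ∘ e) i).2 = 0 := by
    apply hcolour
    rcases hmoved.lt_or_gt with hlt | hlt <;>
      simpa [hSmem hi, hSmem (h.apply_mem_Ioc hmoved), h.involutive i, hlt, hlt.not_gt,
        and_comm] using hsnd
  exact ⟨mem_filter.2 ⟨hi, hmoved, hends.1⟩, hends.2⟩

end IsChordDiagram

lemma exists_card_sndJumps_lt (he : IsClosedTrail ends CE n e v) (hω : ∀ x ∈ CE, 0 < ω x)
    (hbal : ∀ g, IsAdmissible ends CE g → IsBalanced CE ω g) (hg : IsAdmissible ends CE g) :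
    ∃ g', IsAdmissible ends CE g' ∧ #(sndJumps g' n e) < #(sndJumps g n e) := by
  obtain ⟨σ, hσ⟩ := he.exists_isChordDiagram hg.isFlow
  obtain ⟨k, hk, hmixed⟩ := hσ.exists_flipCycle_forall_mem_mixedEnds
  refine ⟨_, (isAdmissible_flipSnd hg hk).map AddEquiv.prodComm, ?_⟩
  have hsub : sndJumps (fun x => AddEquiv.prodComm (flipSnd g k x)) n e ⊆
      {i ∈ mixedEnds g n e σ | (jump (g ∘ e) i).2 = 0} := by
    intro i hi
    obtain ⟨hi, hjump⟩ := mem_filter.1 hi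
    exact mem_filter.2 (hmixed i hi (congrArg Prod.swap hjump))
  have := card_le_card hsub
  have := hσ.two_mul_card_filter_mixedEnds_le
  have := hσ.card_mixedEnds_add_four_le he hω fun k hk => hbal _ (isAdmissible_flipSnd hg hk)
  omega

lemma exists_isAdmissible_not_isBalanced (hC : IsEulerian ends CE) (hω : ∀ x ∈ CE, 0 < ω x)
    (hg : IsAdmissible ends CE g) : ∃ g', IsAdmissible ends CE g' ∧ ¬ IsBalanced CE ω g' := by
  by_contra! hbal
  obtain ⟨n, e, v, he⟩ := hC.exists_isClosedTrail
  obtain ⟨g₀, hg₀, hmin⟩ := (measure fun g : E → ZMod 2 × ZMod 2 => #(sndJumps g n e)).wf.has_min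
    {g | IsAdmissible ends CE g} ⟨g, hg⟩
  obtain ⟨g', hg', hlt⟩ := exists_card_sndJumps_lt he hω hbal hg₀
  exact hmin g' hg' hlt

lemma exists_isAdmissible_sum_lt (hCE : IsEvenSub ends CE) (hg : IsAdmissible ends CE g)
    (hbal : ¬ IsBalanced CE ω g) : ∃ g', IsAdmissible ends CE g' ∧
      4 * ∑ x ∈ CE with g' x = 0, ω x < ∑ x ∈ CE, ω x := by
  contrapose! hbal
  refine isBalanced_of_forall_le fun c => ?_
  have hfilter : ∀ x ∈ CE, (g + (CE : Set E).indicator fun _ => c) x = 0 ↔ g x = c := by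
    intro x hx
    simp [hx, add_eq_zero_iff_eq_neg, ZModModule.neg_eq_self]
  simpa only [filter_congr hfilter] using hbal _ (hg.add_indicator hCE c)

end Descent

theorem fan_conjecture_35_general {V E : Type} [Fintype E] [DecidableEq V] {R : Type*}
    [CommRing R] [LinearOrder R] [IsStrictOrderedRing R] (ends : E → Sym2 V) (CE : Finset E)
    (hC : IsEulerian ends CE) (ω : E → R) (hω : ∀ e ∈ CE, 0 < ω e)
    (f : E → ZMod 2 × ZMod 2) (hf : IsFlow ends f) (hsupp : ∀ e, e ∉ CE → f e ≠ 0) :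
    ∃ g : E → ZMod 2 × ZMod 2, IsFlow ends g ∧ (∀ e, e ∉ CE → g e ≠ 0) ∧
      4 * ∑ e ∈ CE.filter (fun e => g e = 0), ω e < ∑ e ∈ CE, ω e := by
  obtain ⟨g', hg', hbal⟩ := exists_isAdmissible_not_isBalanced hC hω ⟨hf, hsupp⟩
  obtain ⟨g, hg, hlt⟩ := exists_isAdmissible_sum_lt hC.isEvenSub hg' hbal
  exact ⟨g, hg.isFlow, hg.ne_zero, hlt⟩

/-- main theorem: if `ω(C) ≤ 35` and some `ℤ₂×ℤ₂`-flow of `G` is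
nonzero off the circuit `C`, then there is a `ℤ₂×ℤ₂`-flow `g`, nonzero off `C`,
with `ω(E_{g=(0,0)}(C)) < ω(C)/4`. -/
theorem fan_conjecture_35 {V E : Type} [Fintype V] [Fintype E] [DecidableEq V]
    (ends : E → Sym2 V) (CE : Finset E) (hC : IsCircuit ends CE)
    (ω : E → ℕ) (hω : ∀ e, 0 < ω e) (h35 : ∑ e ∈ CE, ω e ≤ 35)
    (f : E → ZMod 2 × ZMod 2) (hf : IsFlow ends f) (hsupp : ∀ e, e ∉ CE → f e ≠ 0) :
    ∃ g : E → ZMod 2 × ZMod 2, IsFlow ends g ∧ (∀ e, e ∉ CE → g e ≠ 0) ∧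
      4 * ∑ e ∈ CE.filter (fun e => g e = 0), ω e < ∑ e ∈ CE, ω e := by
  simpa using mod_cast fan_conjecture_35_general ends CE hC.isEulerian (fun e => (ω e : ℤ))
    (fun e _ => mod_cast hω e) f hf hsupp
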